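/- arXiv:math/0012063 — 2 statements merged into one kernel-verified Lean document; each statement's English description precedes it below -/
import Mathlib

section
/- For every p ∈ R and every exponent vector α : (Fin n × Fin n) →₀ ℕ, write p = Σ_β p_β·X^β with coefficients p_β ∈ F{Y} (where X^β = ∏_{i,j} X_{ij}^{β_{ij}}); note that D maps F{Y} into itself. Then the coefficient of X^α in D(p) equals D(p_α) + (Σ_{i=1}^n Σ_{j=1}^n α_{ij}·Y_{ii})·p_α + Σ_{i=1}^n Σ_{j=1}^n Σ_{ℓ ≠ i} τ_{ij,ℓ}, where τ_{ij,ℓ} = (α_{ij}+1)·Y_{iℓ}·p_{α_{ij,ℓ}} if α_{ℓj} ≥ 1 and τ_{ij,ℓ} = 0 if α_{ℓj} = 0, and α_{ij,ℓ} := α + e_{ij} − e_{ℓj} (e_{ij} being the exponent vector of the single variable X_{ij}). -/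
open MvPolynomial

/-- The polynomial ring `R = F{Y_ij}[X_ij]`: multivariate polynomials over `F` in the
variables `Y i j k` (indexed by `Sum.inl (i,j,k)`) and `X i j` (indexed by `Sum.inr (i,j)`). -/
abbrev Rgen (F : Type*) [Field F] (n : ℕ) : Type _ :=
  MvPolynomial ((Fin n × Fin n × ℕ) ⊕ (Fin n × Fin n)) F

/-- `det[X]`: the determinant of the `n × n` matrix whose `(i,j)` entry is the variable `X i j`. -/
noncomputable def detX (F : Type*) [Field F] (n : ℕ) : Rgen F n :=
  (Matrix.of fun i j : Fin n => X (Sum.inr (i, j))).det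

/-- The `F`-subalgebra `F{Y}` of `R` generated by all the variables `Y i j k`. -/
noncomputable def FY (F : Type*) [Field F] (n : ℕ) : Subalgebra F (Rgen F n) :=
  Algebra.adjoin F (Set.range fun v : Fin n × Fin n × ℕ => X (Sum.inl v))

/-- The `F`-subalgebra `F[X]` of `R` generated by all the variables `X i j`. -/
noncomputable def FX (F : Type*) [Field F] (n : ℕ) : Subalgebra F (Rgen F n) :=
  Algebra.adjoin F (Set.range fun v : Fin n × Fin n => X (Sum.inr v))

/-- The coefficient `p_β ∈ F{Y} ⊆ R` of the monomial `X^β` when `p ∈ R` is written as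
`p = ∑_β p_β • X^β` with coefficients involving only the `Y`-variables. -/
noncomputable def coeffX {F : Type*} [Field F] {n : ℕ}
    (p : Rgen F n) (β : (Fin n × Fin n) →₀ ℕ) : Rgen F n :=
  rename Sum.inl
    (coeff β
      ((sumAlgEquiv F (Fin n × Fin n) (Fin n × Fin n × ℕ))
        ((renameEquiv F (Equiv.sumComm (Fin n × Fin n × ℕ) (Fin n × Fin n))) p)))

/-!
Write `R` as `F{Y}[X]`. A derivation `D` that maps `F{Y}` into itself is the sum of the derivation
applying `D` to the coefficients and of the vector field `∑ᵢⱼ D(Xᵢⱼ) ∂/∂Xᵢⱼ`. Since `D(X) = Y X`,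
the latter is a combination of the operators `X_ℓj ∂/∂Xᵢⱼ`, each of which sends a monomial to a
multiple of a monomial: for `ℓ = i` this is a multiple of the same one, which produces the diagonal
term, and for `ℓ ≠ i` the exponent of `X_ℓj` goes up by one while that of `Xᵢⱼ` goes down by one.
-/

section Derivation

/-- The derivation over `ℤ` given by an additive map satisfying the Leibniz rule; it bundles the
two hypotheses on an unbundled derivation. -/
def derivationOfLeibniz {A : Type*} [CommRing A] (D : A → A)
    (hadd : ∀ a b, D (a + b) = D a + D b) (hmul : ∀ a b, D (a * b) = D a * b + a * D b) :
    Derivation ℤ A A :=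
  .mk' (AddMonoidHom.mk' D hadd).toIntLinearMap fun a b => by
    simpa [mul_comm b, add_comm] using hmul a b

variable {R A B : Type*} [CommSemiring R] [CommSemiring A] [CommSemiring B] [Algebra R A]
  [Algebra R B]

/-- The derivation `e ∘ D ∘ e⁻¹` obtained by transporting `D` along an isomorphism `e`. -/
def conjDerivation (e : A ≃ₐ[R] B) (D : Derivation R A A) : Derivation R B B where
  toLinearMap := e.toLinearMap ∘ₗ (D : A →ₗ[R] A) ∘ₗ e.symm.toLinearMap
  map_one_eq_zero' := by simp
  leibniz' a b := by simp

@[simp]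
theorem conjDerivation_apply (e : A ≃ₐ[R] B) (D : Derivation R A A) (b : B) :
    conjDerivation e D b = e (D (e.symm b)) := rfl

theorem derivation_mem_adjoin {k : Type*} [CommSemiring k] [Algebra k A] (D : Derivation R A A)
    {s : Set A} (hk : ∀ r : k, D (algebraMap k A r) ∈ Algebra.adjoin k s)
    (hs : ∀ x ∈ s, D x ∈ Algebra.adjoin k s) {a : A} (ha : a ∈ Algebra.adjoin k s) :
    D a ∈ Algebra.adjoin k s := by
  induction ha using Algebra.adjoin_induction with
  | mem x hx => exact hs x hx
  | algebraMap r => exact hk r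
  | add x y _ _ hx hy => simpa only [map_add] using add_mem hx hy
  | mul x y hxA hyA hx hy =>
    simpa only [D.leibniz, smul_eq_mul] using add_mem (mul_mem hxA hy) (mul_mem hyA hx)

end Derivation

section CoeffDerivation

variable {k A τ : Type*} [CommSemiring k] [CommSemiring A] [Algebra k A]

theorem mkDerivation_eq_sum_mul_pderiv [Fintype τ] (f : τ → MvPolynomial τ A)
    (p : MvPolynomial τ A) : mkDerivation A f p = ∑ t, f t * pderiv t p := by
  classical
  induction p using MvPolynomial.induction_on with
  | C a => simp
  | add p q hp hq => simp only [map_add, hp, hq, mul_add, Finset.sum_add_distrib]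
  | mul_X p s hp =>
    simp [hp, Derivation.leibniz, mul_add, Finset.sum_add_distrib, Finset.mul_sum, Pi.single_apply,
      mul_comm, mul_left_comm]

theorem coeff_derivation_eq_add_coeff_mkDerivation
    (D : Derivation k (MvPolynomial τ A) (MvPolynomial τ A)) {δ : A → A}
    (hC : ∀ a, D (C a) = C (δ a)) (p : MvPolynomial τ A) (α : τ →₀ ℕ) :
    coeff α (D p) = δ (coeff α p) + coeff α (mkDerivation A (fun t => D (X t)) p) := by
  classical
  have hδ_zero : δ 0 = 0 := C_injective τ A (by simp [← hC])
  have hδ_add (a b : A) : δ (a + b) = δ a + δ b := C_injective τ A (by simp [← hC])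
  induction p using MvPolynomial.induction_on generalizing α with
  | C a =>
    rw [hC, derivation_C, coeff_zero, add_zero, coeff_C, coeff_C]
    split_ifs <;> simp [hδ_zero]
  | add p q hp hq => simp only [map_add, coeff_add, hp, hq, hδ_add, add_add_add_comm]
  | mul_X p s hp =>
    simp only [Derivation.leibniz, smul_eq_mul, mkDerivation_X, coeff_add, coeff_mul_X',
      coeff_X_mul', hp]
    split_ifs
    · exact add_left_comm _ _ _
    · simp [hδ_zero]

theorem coeff_X_mul_pderiv_self (t : τ) (p : MvPolynomial τ A) (α : τ →₀ ℕ) :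
    coeff α (X t * pderiv t p) = α t • coeff α p := by
  classical
  induction p using MvPolynomial.induction_on' with
  | monomial m a =>
    rw [X_mul_pderiv_monomial, coeff_smul, coeff_monomial]
    split_ifs with hm <;> simp [hm]
  | add p q hp hq => simp only [map_add, mul_add, coeff_add, hp, hq, smul_add]

theorem coeff_X_mul_pderiv_of_ne {s t : τ} (hst : s ≠ t) (p : MvPolynomial τ A) (α : τ →₀ ℕ) :
    coeff α (X s * pderiv t p) =
      if 1 ≤ α s then
        (α t + 1) • coeff (α + Finsupp.single t 1 - Finsupp.single s 1) p
      else 0 := by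
  classical
  simp only [coeff_X_mul', Finsupp.mem_support_iff, ← Nat.one_le_iff_ne_zero]
  split_ifs with hα
  · rw [coeff_pderiv, tsub_add_eq_add_tsub (Finsupp.single_le_iff.2 hα), nsmul_eq_mul, mul_comm]
    simp [hst]
  · rfl

theorem coeff_derivation_of_matrix_mul {m n : Type*} [Fintype m] [DecidableEq m] [Fintype n]
    (D : Derivation k (MvPolynomial (m × n) A) (MvPolynomial (m × n) A)) {δ : A → A}
    (hC : ∀ a, D (C a) = C (δ a)) (M : Matrix m m A)
    (hX : ∀ i j, D (X (i, j)) = ∑ l, C (M i l) * X (l, j))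
    (p : MvPolynomial (m × n) A) (α : (m × n) →₀ ℕ) :
    coeff α (D p) =
      δ (coeff α p) + (∑ i, ∑ j, α (i, j) • M i i) * coeff α p
      + ∑ i, ∑ j, ∑ l ∈ Finset.univ.erase i,
          (if 1 ≤ α (l, j) then
            (α (i, j) + 1) •
              (M i l * coeff (α + Finsupp.single (i, j) 1 - Finsupp.single (l, j) 1) p)
          else 0) := by
  have hfield : coeff α (mkDerivation A (fun t => D (X t)) p) =
      ∑ i, ∑ j, ∑ l, M i l * coeff α (X (l, j) * pderiv (i, j) p) := by
    simp only [mkDerivation_eq_sum_mul_pderiv, Fintype.sum_prod_type, hX, Finset.sum_mul,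
      coeff_sum, mul_assoc, coeff_C_mul]
  rw [coeff_derivation_eq_add_coeff_mkDerivation D hC, hfield, add_assoc]
  simp only [Finset.sum_mul, ← Finset.sum_add_distrib]
  congr! 3 with i _ j _
  rw [← Finset.add_sum_erase _ _ (Finset.mem_univ i), coeff_X_mul_pderiv_self]
  congr 1
  · rw [mul_smul_comm, smul_mul_assoc]
  · refine Finset.sum_congr rfl fun l hl => ?_
    rw [coeff_X_mul_pderiv_of_ne (by simpa using Finset.ne_of_mem_erase hl), mul_ite, mul_zero,
      mul_smul_comm]

end CoeffDerivation

section Iterated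

variable {F : Type*} [Field F] {n : ℕ}

/-- The identification of `R` with `F{Y}[X]`, through which `coeffX` is defined. -/
noncomputable def iteratedEquiv (F : Type*) [Field F] (n : ℕ) :
    Rgen F n ≃ₐ[F] MvPolynomial (Fin n × Fin n) (MvPolynomial (Fin n × Fin n × ℕ) F) :=
  (renameEquiv F (Equiv.sumComm (Fin n × Fin n × ℕ) (Fin n × Fin n))).trans
    (sumAlgEquiv F (Fin n × Fin n) (Fin n × Fin n × ℕ))

theorem coeffX_eq_rename_coeff (p : Rgen F n) (β : (Fin n × Fin n) →₀ ℕ) :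
    coeffX p β = rename Sum.inl (coeff β (iteratedEquiv F n p)) := rfl

theorem iteratedEquiv_X_inl (v : Fin n × Fin n × ℕ) :
    iteratedEquiv F n (X (Sum.inl v)) = C (X v) := by
  simp [iteratedEquiv]

theorem iteratedEquiv_X_inr (v : Fin n × Fin n) :
    iteratedEquiv F n (X (Sum.inr v)) = X v := by
  simp [iteratedEquiv]

theorem iteratedEquiv_rename_inl (a : MvPolynomial (Fin n × Fin n × ℕ) F) :
    iteratedEquiv F n (rename Sum.inl a) = C a := by
  induction a using MvPolynomial.induction_on with
  | C r => simp [iteratedEquiv]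
  | add a b ha hb => simp only [map_add, ha, hb]
  | mul_X a v ha => rw [map_mul, map_mul, ha, rename_X, iteratedEquiv_X_inl, C_mul]

theorem mem_FY_iff {q : Rgen F n} : q ∈ FY F n ↔ ∃ a, rename Sum.inl a = q := by
  rw [FY, Algebra.adjoin_range_eq_range_aeval, AlgHom.mem_range]
  simp only [rename_eq_aeval, Function.comp_def]

theorem derivation_mem_FY (D : Derivation ℤ (Rgen F n) (Rgen F n)) {d : F → F}
    (hD_C : ∀ f : F, D (C f) = C (d f))
    (hD_Y : ∀ (i j : Fin n) (k : ℕ), D (X (Sum.inl (i, j, k))) = X (Sum.inl (i, j, k + 1)))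
    {q : Rgen F n} (hq : q ∈ FY F n) : D q ∈ FY F n := by
  refine derivation_mem_adjoin D (fun f => ?_) ?_ hq
  · exact (hD_C f).symm ▸ Subalgebra.algebraMap_mem _ (d f)
  · rintro _ ⟨⟨i, j, k⟩, rfl⟩
    exact (hD_Y i j k).symm ▸ Algebra.subset_adjoin ⟨(i, j, k + 1), rfl⟩

end Iterated

theorem stmt_5_general {F : Type*} [Field F] {n : ℕ} (D : Derivation ℤ (Rgen F n) (Rgen F n))
    (hD_FY : ∀ q ∈ FY F n, D q ∈ FY F n)
    (hD_X : ∀ i j : Fin n,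
      D (X (Sum.inr (i, j))) = ∑ l : Fin n, X (Sum.inl (i, l, 0)) * X (Sum.inr (l, j)))
    (p : Rgen F n) (α : (Fin n × Fin n) →₀ ℕ) :
    coeffX (D p) α =
      D (coeffX p α)
      + (∑ i : Fin n, ∑ j : Fin n, α (i, j) • X (Sum.inl (i, i, (0 : ℕ)))) * coeffX p α
      + ∑ i : Fin n, ∑ j : Fin n, ∑ l ∈ Finset.univ.erase i,
          (if 1 ≤ α (l, j) then
            (α (i, j) + 1) •
              (X (Sum.inl (i, l, (0 : ℕ))) *
                coeffX p (α + Finsupp.single (i, j) 1 - Finsupp.single (l, j) 1))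
          else 0) := by
  let e := (iteratedEquiv F n).restrictScalars ℤ
  have hD_rename (a) : ∃ b, rename Sum.inl b = D (rename Sum.inl a) :=
    mem_FY_iff.1 (hD_FY _ (mem_FY_iff.2 ⟨a, rfl⟩))
  choose δ hδ using hD_rename
  have hC (a) : conjDerivation e D (C a) = C (δ a) := by
    simp [e, ← iteratedEquiv_rename_inl, hδ]
  have hX (i j) : conjDerivation e D (X (i, j)) = ∑ l, C (X (i, l, 0)) * X (l, j) := by
    simp [e, ← iteratedEquiv_X_inl, ← iteratedEquiv_X_inr, hD_X]
  have hcoeff := coeff_derivation_of_matrix_mul (conjDerivation e D) hC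
    (.of fun i l => X (i, l, 0)) hX (e p) α
  simp only [conjDerivation_apply, AlgEquiv.symm_apply_apply] at hcoeff
  simp only [coeffX_eq_rename_coeff, ← hδ]
  simpa only [e, AlgEquiv.restrictScalars_apply, map_add, map_mul, map_sum, map_nsmul,
    apply_ite (rename Sum.inl), map_zero, Matrix.of_apply, rename_X]
    using congrArg (rename Sum.inl) hcoeff

/-- The formula for the coefficient of `X^α` in `D p`. -/
theorem stmt_5
    {F : Type*} [Field F] [CharZero F] (d : F → F)
    (hd_add : ∀ a b : F, d (a + b) = d a + d b)
    (hd_mul : ∀ a b : F, d (a * b) = d a * b + a * d b)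
    (n : ℕ) (hn : 1 ≤ n)
    (D : Rgen F n → Rgen F n)
    (hD_add : ∀ a b, D (a + b) = D a + D b)
    (hD_mul : ∀ a b, D (a * b) = D a * b + a * D b)
    (hD_C : ∀ f : F, D (C f) = C (d f))
    (hD_Y : ∀ (i j : Fin n) (k : ℕ),
      D (X (Sum.inl (i, j, k))) = X (Sum.inl (i, j, k + 1)))
    (hD_X : ∀ i j : Fin n,
      D (X (Sum.inr (i, j))) = ∑ l : Fin n, X (Sum.inl (i, l, 0)) * X (Sum.inr (l, j)))
    (p : Rgen F n) (α : (Fin n × Fin n) →₀ ℕ) :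
    coeffX (D p) α =
      D (coeffX p α)
      + (∑ i : Fin n, ∑ j : Fin n, α (i, j) • X (Sum.inl (i, i, (0 : ℕ)))) * coeffX p α
      + ∑ i : Fin n, ∑ j : Fin n, ∑ l ∈ Finset.univ.erase i,
          (if 1 ≤ α (l, j) then
            (α (i, j) + 1) •
              (X (Sum.inl (i, l, (0 : ℕ))) *
                coeffX p (α + Finsupp.single (i, j) 1 - Finsupp.single (l, j) 1))
          else 0) :=
  stmt_5_general (derivationOfLeibniz D hD_add hD_mul)
    (fun _ => derivation_mem_FY _ hD_C hD_Y) hD_X p α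
end

section
/- The only Darboux polynomials in R are the scalar multiples of powers of det[X]: if p, q ∈ R satisfy p ≠ 0 and D(p) = q·p, then there exist a ∈ ℕ and a nonzero ℓ ∈ F such that p = C(ℓ)·det[X]^a and q = C(d(ℓ)/ℓ) + a·Σ_{i=1}^n Y_{ii}. -/
open MvPolynomial

/-!
Commuting `D` with `∂/∂Y_{ij,k+1}` gives `∂/∂Y_{ij,k}`. Hence if a Darboux polynomial `p` does not
involve `Y_{ij,k+1}`, then it divides its own partial derivative with respect to `Y_{ij,k}`, which
vanishes for reasons of degree; descending in `k`, `p` involves the variables `X` only.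
On such polynomials `∂/∂Y_{ij,0} ∘ D` is the polarization `∑ₘ X_jm ∂/∂X_im`, so `p` divides all its
polarizations and, by degree again, is a common eigenvector of `gl_n` with eigenvalues in `F`.
Commutators annihilate a common eigenvector, so the off-diagonal polarizations annihilate `p` and
the diagonal ones all act by the degree `a` of `p` in a row of `X`; so they do on `det[X] ^ a`.
As the generic matrix `X` is nonsingular, the polarizations determine the partial derivatives, so
`p` and `det[X] ^ a` have the same logarithmic derivatives and are proportional in characteristic
zero.
-/

section PartialDerivatives

variable {σ R : Type*}

theorem coeff_X_mul_pderiv [CommSemiring R] (i : σ) (p : MvPolynomial σ R) (m : σ →₀ ℕ) :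
    coeff m (X i * pderiv i p) = m i * coeff m p := by
  classical
  induction p using MvPolynomial.induction_on' with
  | monomial s r =>
    rw [X_mul_pderiv_monomial, coeff_smul, coeff_monomial]
    split_ifs with h
    · rw [h, nsmul_eq_mul]
    · rw [smul_zero, mul_zero]
  | add p q hp hq => rw [map_add, mul_add, coeff_add, coeff_add, hp, hq, mul_add]

theorem totalDegree_pderiv_lt [CommSemiring R] {i : σ} {p : MvPolynomial σ R}
    (h : pderiv i p ≠ 0) : (pderiv i p).totalDegree < p.totalDegree := by
  obtain ⟨m, hm, hdeg⟩ := Finset.exists_mem_eq_sup _ (support_nonempty.mpr h) Finsupp.degree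
  have hmem : m + Finsupp.single i 1 ∈ p.support := by
    rw [mem_support_iff, coeff_pderiv] at hm
    exact mem_support_iff.mpr (left_ne_zero_of_mul hm)
  calc (pderiv i p).totalDegree = m.degree := hdeg
    _ < (m + Finsupp.single i 1).degree := by simp
    _ ≤ p.totalDegree := le_totalDegree hmem

theorem totalDegree_X_mul_pderiv_le [CommSemiring R] (i j : σ) (p : MvPolynomial σ R) :
    (X i * pderiv j p).totalDegree ≤ p.totalDegree := by
  by_cases h : pderiv j p = 0
  · simp [h]
  · have : Nontrivial R :=
      (subsingleton_or_nontrivial R).resolve_left fun _ => h (Subsingleton.elim _ _)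
    calc (X i * pderiv j p).totalDegree
        ≤ (X i : MvPolynomial σ R).totalDegree + (pderiv j p).totalDegree := totalDegree_mul _ _
      _ = (pderiv j p).totalDegree + 1 := by rw [totalDegree_X, add_comm]
      _ ≤ p.totalDegree := totalDegree_pderiv_lt h

theorem pderiv_eq_zero_of_dvd_pderiv [CommSemiring R] [NoZeroDivisors R]
    {i : σ} {p : MvPolynomial σ R} (h : p ∣ pderiv i p) : pderiv i p = 0 := by
  by_contra h0
  exact (totalDegree_le_of_dvd_of_isDomain h h0).not_gt (totalDegree_pderiv_lt h0)

theorem exists_eq_C_mul_of_dvd_of_totalDegree_le [CommSemiring R] [NoZeroDivisors R]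
    {p q : MvPolynomial σ R} (h : p ∣ q) (hdeg : q.totalDegree ≤ p.totalDegree) :
    ∃ c : R, q = C c * p := by
  obtain ⟨r, rfl⟩ := h
  by_cases h0 : p * r = 0
  · exact ⟨0, by rw [h0, C_0, zero_mul]⟩
  rw [totalDegree_mul_of_isDomain (left_ne_zero_of_mul h0) (right_ne_zero_of_mul h0)] at hdeg
  exact ⟨coeff 0 r, by rw [← totalDegree_eq_zero_iff_eq_C.mp (by omega), mul_comm]⟩

theorem pderiv_eq_zero_iff_notMem_vars [CommSemiring R] [NoZeroDivisors R] [CharZero R]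
    {i : σ} {p : MvPolynomial σ R} : pderiv i p = 0 ↔ i ∉ p.vars := by
  refine ⟨fun h hi => ?_, pderiv_eq_zero_of_notMem_vars⟩
  obtain ⟨m, hm, him⟩ := (mem_vars_iff_mem_support i).mp hi
  have hcoeff := coeff_X_mul_pderiv i p m
  rw [h, mul_zero, coeff_zero] at hcoeff
  exact mul_ne_zero (Nat.cast_ne_zero.mpr (Finsupp.mem_support_iff.mp him))
    (mem_support_iff.mp hm) hcoeff.symm

theorem exists_eq_C_of_forall_pderiv_eq_zero [CommSemiring R] [NoZeroDivisors R] [CharZero R]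
    {p : MvPolynomial σ R} (h : ∀ i, pderiv i p = 0) : ∃ c : R, p = C c :=
  ⟨_, vars_eq_empty_iff_eq_C.mp <| Finset.eq_empty_of_forall_notMem fun i =>
    pderiv_eq_zero_iff_notMem_vars.mp (h i)⟩

theorem exists_eq_C_mul_of_pderiv_mul_eq {F : Type*} [Field F] [CharZero F]
    {p r : MvPolynomial σ F} (hr : r ≠ 0) (h : ∀ i, pderiv i p * r = p * pderiv i r) :
    ∃ c : F, p = C c * r := by
  obtain ⟨r', p', g, hrel, rfl, rfl⟩ := UniqueFactorizationMonoid.exists_reduced_factors r hr p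
  have hg : g ≠ 0 := left_ne_zero_of_mul hr
  have hr' : r' ≠ 0 := right_ne_zero_of_mul hr
  -- For coprime `p` and `r` the hypothesis makes `r` divide its own partial derivatives.
  have hreduced (i : σ) : pderiv i p' * r' = p' * pderiv i r' := by
    refine mul_left_cancel₀ (mul_ne_zero hg hg) ?_
    have := h i
    simp only [pderiv_mul] at this
    linear_combination this
  have hr_const (i : σ) : pderiv i r' = 0 :=
    pderiv_eq_zero_of_dvd_pderiv <|
      IsRelPrime.dvd_of_dvd_mul_left hrel ⟨pderiv i p', by rw [← hreduced, mul_comm]⟩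
  have hp_const (i : σ) : pderiv i p' = 0 :=
    (mul_eq_zero_iff_right hr').mp (by rw [hreduced, hr_const, mul_zero])
  obtain ⟨u, rfl⟩ := exists_eq_C_of_forall_pderiv_eq_zero hr_const
  obtain ⟨w, rfl⟩ := exists_eq_C_of_forall_pderiv_eq_zero hp_const
  have hu : u ≠ 0 := by rintro rfl; exact hr' C_0
  refine ⟨w / u, ?_⟩
  rw [mul_left_comm, ← C_mul, div_mul_cancel₀ _ hu]

theorem derivation_ext_of_C_of_X {S M : Type*} [CommSemiring S] [CommSemiring R] [Algebra S R]
    [AddCommMonoid M] [Module S M] [Module (MvPolynomial σ R) M]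
    {D₁ D₂ : Derivation S (MvPolynomial σ R) M}
    (hC : ∀ r, D₁ (C r) = D₂ (C r)) (hX : ∀ i, D₁ (X i) = D₂ (X i)) : D₁ = D₂ := by
  ext1 p
  induction p using MvPolynomial.induction_on with
  | C r => exact hC r
  | add p q hp hq => rw [map_add, map_add, hp, hq]
  | mul_X p i hp => rw [Derivation.leibniz, Derivation.leibniz, hp, hX]

end PartialDerivatives

section Determinants

variable {R A ι : Type*} [CommSemiring R] [DecidableEq ι]

theorem derivation_prod [CommSemiring A] [Algebra R A] (δ : Derivation R A A) (s : Finset ι)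
    (f : ι → A) : δ (∏ i ∈ s, f i) = ∑ i ∈ s, ∏ j ∈ s, Function.update f i (δ (f i)) j := by
  induction s using Finset.induction_on with
  | empty => simp
  | insert a s ha ih =>
    have hfix (i : ι) (hi : i ∈ s) : Function.update f i (δ (f i)) a = f a :=
      Function.update_of_ne (ne_of_mem_of_not_mem hi ha).symm _ _
    have hprod : ∏ j ∈ s, Function.update f a (δ (f a)) j = ∏ j ∈ s, f j :=
      Finset.prod_update_of_notMem ha _ _
    simp only [Finset.prod_insert ha, Finset.sum_insert ha, Derivation.leibniz, ih, hprod,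
      Function.update_self, smul_eq_mul, Finset.mul_sum]
    rw [add_comm, mul_comm]
    exact congrArg _ (Finset.sum_congr rfl fun i hi => by rw [hfix i hi])

variable [CommRing A] [Algebra R A] [Fintype ι]

theorem derivation_det (δ : Derivation R A A) (M : Matrix ι ι A) :
    δ M.det = ∑ i, (M.updateRow i fun j => δ (M i j)).det := by
  have hrow (i : ι) (τ : Equiv.Perm ι) (j : ι) : M.updateRow i (fun j => δ (M i j)) j (τ j) =
      Function.update (fun j => M j (τ j)) i (δ (M i (τ i))) j := by
    by_cases hj : j = i
    · rw [hj, Matrix.updateRow_self, Function.update_self]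
    · rw [Matrix.updateRow_ne hj, Function.update_of_ne hj]
  simp only [← Matrix.det_transpose M, ← Matrix.det_transpose (M.updateRow _ _), Matrix.det_apply,
    Matrix.transpose_apply, hrow, Units.smul_def, map_sum, map_zsmul, derivation_prod,
    Finset.smul_sum]
  exact Finset.sum_comm

theorem derivation_det_of_map_eq_mul (δ : Derivation R A A) {M B : Matrix ι ι A}
    (h : M.map δ = B * M) : δ M.det = B.trace * M.det := by
  have hrow (i : ι) : (fun j => δ (M i j)) = ∑ k, B i k • M k := by
    ext j
    simpa [Matrix.mul_apply] using congrFun₂ h i j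
  simp only [derivation_det, hrow, Matrix.det_updateRow_sum, smul_eq_mul, Matrix.trace,
    Matrix.diag_apply, Finset.sum_mul]

end Determinants

section Polarization

variable {ι κ R : Type*} [DecidableEq ι]

/-- The polarization `∑ₘ x_jm ∂/∂x_im` on polynomials in the entries of a generic matrix: the
derivation by which the matrix unit `E_ij` acts infinitesimally on the left. It replaces row `i`
of the generic matrix by row `j` and sends the other rows to zero. -/
noncomputable def polarization (κ R : Type*) [CommSemiring R] (i j : ι) :
    Derivation R (MvPolynomial (ι × κ) R) (MvPolynomial (ι × κ) R) :=
  mkDerivation R fun v => if v.1 = i then X (j, v.2) else 0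

theorem polarization_X [CommSemiring R] (i j : ι) (v : ι × κ) :
    polarization κ R i j (X v) = if v.1 = i then X (j, v.2) else 0 :=
  mkDerivation_X R _ v

theorem polarization_apply [CommSemiring R] [Fintype κ] (i j : ι)
    (p : MvPolynomial (ι × κ) R) :
    polarization κ R i j p = ∑ m, X (j, m) * pderiv (i, m) p := by
  classical
  induction p using MvPolynomial.induction_on with
  | C r => simp only [derivation_C, mul_zero, Finset.sum_const_zero]
  | add p q hp hq => simp only [map_add, mul_add, Finset.sum_add_distrib, hp, hq]
  | mul_X p v hp =>
    have hX : polarization κ R i j (X v) = ∑ m, X (j, m) * pderiv (i, m) (X v) := by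
      obtain ⟨a, b⟩ := v
      by_cases h : a = i <;> simp [polarization_X, pderiv_X, Pi.single_apply, h]
    simp only [Derivation.leibniz, smul_eq_mul, hp, hX, mul_add, Finset.mul_sum,
      Finset.sum_add_distrib, mul_left_comm]

theorem lie_polarization [CommRing R] (i j k l : ι) :
    ⁅polarization κ R i j, polarization κ R k l⁆ =
      (if l = i then polarization κ R k j else 0) -
        (if j = k then polarization κ R i l else 0) := by
  refine derivation_ext fun v => ?_
  simp only [Derivation.commutator_apply, polarization_X, Derivation.sub_apply]
  split_ifs <;> simp_all [polarization_X]

theorem totalDegree_polarization_le [CommSemiring R] [Finite κ] (i j : ι)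
    (p : MvPolynomial (ι × κ) R) :
    (polarization κ R i j p).totalDegree ≤ p.totalDegree := by
  cases nonempty_fintype κ
  rw [polarization_apply]
  exact totalDegree_finsetSum_le fun m _ => totalDegree_X_mul_pderiv_le _ _ _

theorem coeff_polarization_self [CommSemiring R] [Fintype κ] (i : ι) (p : MvPolynomial (ι × κ) R)
    (m : ι × κ →₀ ℕ) :
    coeff m (polarization κ R i i p) = (∑ b, m (i, b) : ℕ) * coeff m p := by
  simp only [polarization_apply, coeff_sum, coeff_X_mul_pderiv, Nat.cast_sum, Finset.sum_mul]

theorem exists_nat_polarization_eq [CommRing R] [NoZeroDivisors R] [Finite κ]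
    {p : MvPolynomial (ι × κ) R} (hp : p ≠ 0) (h : ∀ i j, p ∣ polarization κ R i j p) :
    ∃ a : ℕ, ∀ i j, polarization κ R i j p = if i = j then a • p else 0 := by
  cases nonempty_fintype κ
  choose g hg using fun i j =>
    exists_eq_C_mul_of_dvd_of_totalDegree_le (h i j) (totalDegree_polarization_le i j p)
  have hcomm (i j k l : ι) : ⁅polarization κ R i j, polarization κ R k l⁆ p = 0 := by
    simp only [Derivation.commutator_apply, hg, ← smul_eq_C_mul, Derivation.map_smul]
    rw [smul_comm, sub_self]
  have hoff {i j : ι} (hij : i ≠ j) : polarization κ R i j p = 0 := by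
    simpa [lie_polarization, hij.symm] using hcomm i i i j
  have hdiag (i j : ι) : polarization κ R i i p = polarization κ R j j p := by
    simpa [lie_polarization, sub_eq_zero] using hcomm j i i j
  rcases isEmpty_or_nonempty ι with _ | ⟨⟨i₀⟩⟩
  · exact ⟨0, fun i => isEmptyElim i⟩
  obtain ⟨m, hm⟩ := ne_zero_iff.mp hp
  have hweight : g i₀ i₀ = (∑ b, m (i₀, b) : ℕ) := by
    refine mul_right_cancel₀ hm ?_
    rw [← coeff_polarization_self, hg, coeff_C_mul]
  refine ⟨∑ b, m (i₀, b), fun i j => ?_⟩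
  split_ifs with hij
  · rw [← hij, hdiag i i₀, hg, hweight, map_natCast, nsmul_eq_mul]
  · exact hoff hij

end Polarization

section GenericDeterminant

variable {ι R : Type*} [DecidableEq ι]

theorem polarization_det_mvPolynomialX [CommRing R] [Fintype ι] (i j : ι) :
    polarization ι R i j (Matrix.mvPolynomialX ι ι R).det =
      if i = j then (Matrix.mvPolynomialX ι ι R).det else 0 := by
  rw [derivation_det_of_map_eq_mul (B := Matrix.single i j 1)]
  · split_ifs with h
    · rw [h, Matrix.trace_single_eq_same, one_mul]
    · rw [Matrix.trace_single_eq_of_ne _ _ _ h, zero_mul]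
  · ext a b : 2
    obtain rfl | h := eq_or_ne a i <;> simp [polarization_X, *]

theorem polarization_det_mvPolynomialX_pow [CommRing R] [Fintype ι] (i j : ι) (a : ℕ) :
    polarization ι R i j ((Matrix.mvPolynomialX ι ι R).det ^ a) =
      if i = j then a • (Matrix.mvPolynomialX ι ι R).det ^ a else 0 := by
  rcases a with _ | a
  · simp
  · rw [Derivation.leibniz_pow, polarization_det_mvPolynomialX]
    split_ifs
    · rw [Nat.add_sub_cancel, smul_eq_mul, ← pow_succ]
    · rw [smul_zero, smul_zero]

theorem pderiv_mul_eq_of_polarization_mul_eq [CommRing R] [IsDomain R] [Finite ι]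
    {p r : MvPolynomial (ι × ι) R}
    (h : ∀ i j, polarization ι R i j p * r = p * polarization ι R i j r) (v : ι × ι) :
    pderiv v p * r = p * pderiv v r := by
  cases nonempty_fintype ι
  obtain ⟨i, m⟩ := v
  have hker : (Matrix.mvPolynomialX ι ι R).mulVec
      (fun m => pderiv (i, m) p * r - p * pderiv (i, m) r) = 0 := by
    ext1 j
    have hrow := h i j
    simp only [polarization_apply, Finset.sum_mul, Finset.mul_sum] at hrow
    simp only [Matrix.mulVec, dotProduct, Matrix.mvPolynomialX_apply, mul_sub,
      Finset.sum_sub_distrib, Pi.zero_apply, sub_eq_zero]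
    simpa only [mul_assoc, mul_left_comm] using hrow
  exact sub_eq_zero.mp <|
    congrFun (Matrix.eq_zero_of_mulVec_eq_zero (Matrix.det_mvPolynomialX_ne_zero ι R) hker) m

theorem exists_eq_C_mul_det_pow_of_dvd_polarization {F : Type*} [Field F] [CharZero F] [Fintype ι]
    {p : MvPolynomial (ι × ι) F} (hp : p ≠ 0) (h : ∀ i j, p ∣ polarization ι F i j p) :
    ∃ (a : ℕ) (l : F), p = C l * (Matrix.mvPolynomialX ι ι F).det ^ a := by
  obtain ⟨a, ha⟩ := exists_nat_polarization_eq hp h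
  refine ⟨a, exists_eq_C_mul_of_pderiv_mul_eq
    (pow_ne_zero a (Matrix.det_mvPolynomialX_ne_zero ι F)) <|
      pderiv_mul_eq_of_polarization_mul_eq fun i j => ?_⟩
  rw [ha, polarization_det_mvPolynomialX_pow]
  split_ifs
  · rw [smul_mul_assoc, mul_smul_comm]
  · rw [zero_mul, mul_zero]

end GenericDeterminant

/-- `δ` is the derivation of `R{Y}[X]` extending `d` for which `X' = Y X` is the generic linear
differential system: `Y` is a square matrix of differential indeterminates, `Sum.inl (i, j, k)`
standing for the `k`-th derivative of its entry `(i, j)`, and `Sum.inr (i, j)` stands for the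
entry `(i, j)` of `X`. Only additivity is built into `δ`, which is not `R`-linear. -/
structure IsGenericLinearDerivation {ι κ R : Type*} [Fintype ι] [CommRing R] (d : R → R)
    (δ : Derivation ℤ (MvPolynomial ((ι × ι × ℕ) ⊕ (ι × κ)) R)
      (MvPolynomial ((ι × ι × ℕ) ⊕ (ι × κ)) R)) : Prop where
  map_C (f : R) : δ (C f) = C (d f)
  map_Y (i j : ι) (k : ℕ) : δ (X (Sum.inl (i, j, k))) = X (Sum.inl (i, j, k + 1))
  map_X (i : ι) (j : κ) :
    δ (X (Sum.inr (i, j))) = ∑ l, X (Sum.inl (i, l, 0)) * X (Sum.inr (l, j))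

namespace IsGenericLinearDerivation

section Elimination

variable {ι κ R : Type*} [Fintype ι] [CommRing R] {d : R → R}
  {δ : Derivation ℤ (MvPolynomial ((ι × ι × ℕ) ⊕ (ι × κ)) R)
    (MvPolynomial ((ι × ι × ℕ) ⊕ (ι × κ)) R)}

theorem lie_pderiv_inl_succ (hδ : IsGenericLinearDerivation d δ) (i j : ι) (k : ℕ) :
    ⁅(pderiv (R := R) (Sum.inl (i, j, k + 1) : (ι × ι × ℕ) ⊕ (ι × κ))).restrictScalars ℤ, δ⁆ =
      (pderiv (Sum.inl (i, j, k))).restrictScalars ℤ := by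
  classical
  refine derivation_ext_of_C_of_X (fun f => ?_) fun v => ?_
  · simp [Derivation.commutator_apply, hδ.map_C]
  · rcases v with ⟨a, b, c⟩ | ⟨a, b⟩
    · simp [Derivation.commutator_apply, hδ.map_Y, pderiv_X, Pi.single_apply, apply_ite δ]
    · simp [Derivation.commutator_apply, hδ.map_X, pderiv_X]

theorem pderiv_inl_zero_apply_rename [DecidableEq ι] (hδ : IsGenericLinearDerivation d δ)
    (i j : ι) (p : MvPolynomial (ι × κ) R) :
    pderiv (Sum.inl (i, j, 0)) (δ (rename Sum.inr p)) =
      rename Sum.inr (polarization κ R i j p) := by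
  classical
  have hzero (p : MvPolynomial (ι × κ) R) : pderiv (Sum.inl (i, j, 0))
      (rename Sum.inr p : MvPolynomial ((ι × ι × ℕ) ⊕ (ι × κ)) R) = 0 :=
    pderiv_eq_zero_of_notMem_vars fun h => by
      simpa using vars_rename _ _ h
  induction p using MvPolynomial.induction_on with
  | C f => simp [hδ.map_C]
  | add p q hp hq => simp only [map_add, hp, hq]
  | mul_X p v hp =>
    obtain ⟨a, b⟩ := v
    by_cases h : a = i <;>
      simp [hδ.map_X, hp, hzero, polarization_X, pderiv_X, Pi.single_apply, h]

variable [NoZeroDivisors R]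

theorem pderiv_inl_eq_zero_of_pderiv_inl_succ (hδ : IsGenericLinearDerivation d δ)
    {p : MvPolynomial ((ι × ι × ℕ) ⊕ (ι × κ)) R} (hp : p ∣ δ p) {i j : ι} {k : ℕ}
    (hk : pderiv (Sum.inl (i, j, k + 1)) p = 0) : pderiv (Sum.inl (i, j, k)) p = 0 := by
  obtain ⟨q, hq⟩ := hp
  have hcomm := DFunLike.congr_fun (hδ.lie_pderiv_inl_succ i j k) p
  simp only [Derivation.commutator_apply, Derivation.restrictScalars_apply, hq, pderiv_mul, hk,
    zero_mul, zero_add, map_zero, sub_zero] at hcomm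
  exact pderiv_eq_zero_of_dvd_pderiv ⟨_, hcomm.symm⟩

theorem pderiv_inl_eq_zero (hδ : IsGenericLinearDerivation d δ)
    {p : MvPolynomial ((ι × ι × ℕ) ⊕ (ι × κ)) R} (hp : p ∣ δ p) (v : ι × ι × ℕ) :
    pderiv (Sum.inl v) p = 0 := by
  obtain ⟨i, j, k⟩ := v
  by_contra hk
  have hne (t : ℕ) : pderiv (Sum.inl (i, j, k + t)) p ≠ 0 := by
    induction t with
    | zero => exact hk
    | succ t ih => exact fun h => ih (hδ.pderiv_inl_eq_zero_of_pderiv_inl_succ hp h)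
  have hinj : Function.Injective fun t : ℕ => (Sum.inl (i, j, k + t) : (ι × ι × ℕ) ⊕ (ι × κ)) :=
    fun s t hst => by simpa using hst
  refine Set.infinite_of_injective_forall_mem hinj (fun t => ?_) p.vars.finite_toSet
  by_contra hmem
  exact hne t (pderiv_eq_zero_of_notMem_vars hmem)

theorem exists_rename_inr_eq [CharZero R] (hδ : IsGenericLinearDerivation d δ)
    {p : MvPolynomial ((ι × ι × ℕ) ⊕ (ι × κ)) R} (hp : p ∣ δ p) :
    ∃ p₀ : MvPolynomial (ι × κ) R, rename Sum.inr p₀ = p := by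
  refine exists_rename_eq_of_vars_subset_range p _ Sum.inr_injective fun v hv => ?_
  rcases v with v | v
  · exact absurd hv (pderiv_eq_zero_iff_notMem_vars.mp (hδ.pderiv_inl_eq_zero hp v))
  · exact Set.mem_range_self v

theorem dvd_polarization [DecidableEq ι] (hδ : IsGenericLinearDerivation d δ)
    {p : MvPolynomial (ι × κ) R} (hp : rename Sum.inr p ∣ δ (rename Sum.inr p)) (i j : ι) :
    p ∣ polarization κ R i j p := by
  have hdvd : (rename Sum.inr p : MvPolynomial ((ι × ι × ℕ) ⊕ (ι × κ)) R) ∣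
      rename Sum.inr (polarization κ R i j p) := by
    rw [← hδ.pderiv_inl_zero_apply_rename]
    obtain ⟨q, hq⟩ := hp
    rw [hq, pderiv_mul, hδ.pderiv_inl_eq_zero ⟨q, hq⟩, zero_mul, zero_add]
    exact dvd_mul_right _ _
  simpa only [killCompl_rename_app] using map_dvd (killCompl Sum.inr_injective) hdvd

end Elimination

section Determinant

variable {F : Type*} [Field F] {n : ℕ} {d : F → F} {δ : Derivation ℤ (Rgen F n) (Rgen F n)}

theorem map_detX (hδ : IsGenericLinearDerivation d δ) :
    δ (detX F n) = (∑ i, X (Sum.inl (i, i, 0))) * detX F n :=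
  derivation_det_of_map_eq_mul δ (B := Matrix.of fun i j => X (Sum.inl (i, j, 0))) <|
    Matrix.ext hδ.map_X

theorem map_C_mul_detX_pow (hδ : IsGenericLinearDerivation d δ) {l : F} (hl : l ≠ 0) (a : ℕ) :
    δ (C l * detX F n ^ a) =
      (C (d l / l) + a • ∑ i, X (Sum.inl (i, i, 0))) * (C l * detX F n ^ a) := by
  have hpow : δ (detX F n ^ a) = (a • ∑ i, X (Sum.inl (i, i, 0))) * detX F n ^ a := by
    rcases a with _ | a
    · simp
    · rw [Derivation.leibniz_pow, hδ.map_detX, Nat.add_sub_cancel, smul_eq_mul, pow_succ]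
      simp only [nsmul_eq_mul]
      ring
  have hC : (C (d l) : Rgen F n) = C (d l / l) * C l := by rw [← C_mul, div_mul_cancel₀ _ hl]
  rw [Derivation.leibniz, hpow, hδ.map_C, hC, smul_eq_mul, smul_eq_mul]
  ring

end Determinant

end IsGenericLinearDerivation

theorem rename_inr_det_mvPolynomialX (F : Type*) [Field F] (n : ℕ) :
    rename Sum.inr (Matrix.mvPolynomialX (Fin n) (Fin n) F).det = detX F n := by
  rw [AlgHom.map_det, detX]
  congr 1
  ext i j : 2
  simp

/-- The only Darboux polynomials in `R = F{Y}[X]` are the `F`-scalar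
multiples of powers of `det[X]`: if `p ≠ 0` and `D p = q * p` then `p = C ℓ * det[X]^a`
and `q = C (d ℓ / ℓ) + a • ∑ i, Y i i` for some `a ∈ ℕ` and nonzero `ℓ ∈ F`. -/
theorem stmt_13
    {F : Type*} [Field F] [CharZero F] (d : F → F)
    (hd_add : ∀ a b : F, d (a + b) = d a + d b)
    (hd_mul : ∀ a b : F, d (a * b) = d a * b + a * d b)
    (n : ℕ) (hn : 1 ≤ n)
    (D : Rgen F n → Rgen F n)
    (hD_add : ∀ a b, D (a + b) = D a + D b)
    (hD_mul : ∀ a b, D (a * b) = D a * b + a * D b)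
    (hD_C : ∀ f : F, D (C f) = C (d f))
    (hD_Y : ∀ (i j : Fin n) (k : ℕ),
      D (X (Sum.inl (i, j, k))) = X (Sum.inl (i, j, k + 1)))
    (hD_X : ∀ i j : Fin n,
      D (X (Sum.inr (i, j))) = ∑ l : Fin n, X (Sum.inl (i, l, 0)) * X (Sum.inr (l, j)))
    (p q : Rgen F n) (hp : p ≠ 0) (hDp : D p = q * p) :
    ∃ (a : ℕ) (l : F), l ≠ 0 ∧ p = C l * detX F n ^ a ∧
      q = C (d l / l) + a • ∑ i : Fin n, X (Sum.inl (i, i, (0 : ℕ))) := by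
  let δ : Derivation ℤ (Rgen F n) (Rgen F n) :=
    Derivation.mk' (AddMonoidHom.mk' D hD_add).toIntLinearMap fun a b =>
      (hD_mul a b).trans (by rw [add_comm, smul_eq_mul, smul_eq_mul, mul_comm (D a)]; rfl)
  have hδ : IsGenericLinearDerivation d δ := ⟨hD_C, hD_Y, hD_X⟩
  have hδp : δ p = q * p := hDp
  obtain ⟨p₀, rfl⟩ := hδ.exists_rename_inr_eq (Dvd.intro_left q hδp.symm)
  obtain ⟨a, l, rfl⟩ := exists_eq_C_mul_det_pow_of_dvd_polarization
    (ne_zero_of_map hp) (hδ.dvd_polarization (Dvd.intro_left q hδp.symm))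
  rw [map_mul, map_pow, rename_C, rename_inr_det_mvPolynomialX] at hp hδp ⊢
  have hl : l ≠ 0 := by
    rintro rfl
    rw [C_0, zero_mul] at hp
    exact hp rfl
  exact ⟨a, l, hl, rfl, mul_right_cancel₀ hp (hδp.symm.trans (hδ.map_C_mul_detX_pow hl a))⟩
end
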